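/- arXiv:1301.5442 — 13 statements merged into one kernel-verified Lean document; each statement's English description precedes it below -/
import Mathlib

section
/- Let k be a field, g a Lie algebra over k, V a k-vector space, and let ◁ : V × g → V, ▷ : V × g → g, f : V × V → g, {−,−} : V × V → V be bilinear maps. The unified product bracket on the vector space g × V, defined by [(g,x),(h,y)] = ([g,h] + x ▷ h − y ▷ g + f(x,y), {x,y} + x ◁ h − y ◁ g), is a Lie algebra bracket if and only if the following seven conditions hold for all g, h ∈ g and x, y, z ∈ V: (LE1) f(x,x) = 0 and {x,x} = 0; (LE2) x ◁ [g,h] = (x ◁ g) ◁ h − (x ◁ h) ◁ g; (LE3) x ▷ [g,h] = [x ▷ g, h] + [g, x ▷ h] + (x ◁ g) ▷ h − (x ◁ h) ▷ g; (LE4) {x,y} ◁ g = {x, y ◁ g} + {x ◁ g, y} + x ◁ (y ▷ g) − y ◁ (x ▷ g); (LE5) {x,y} ▷ g = x ▷ (y ▷ g) − y ▷ (x ▷ g) + [g, f(x,y)] + f(x, y ◁ g) + f(x ◁ g, y); (LE6) f(x,{y,z}) + f(y,{z,x}) + f(z,{x,y}) + x ▷ f(y,z) + y ▷ f(z,x)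 + z ▷ f(x,y) = 0; (LE7) {x,{y,z}} + {y,{z,x}} + {z,{x,y}} + x ◁ f(y,z) + y ◁ f(z,x) + z ◁ f(x,y) = 0. -/
/-- A (bilinear) bracket `B` on `L` is a Lie algebra bracket if it is alternating and
satisfies the Jacobi identity. -/
def IsLieBracket {L : Type*} [AddCommGroup L] (B : L → L → L) : Prop :=
  (∀ p, B p p = 0) ∧ ∀ p q r, B p (B q r) + B q (B r p) + B r (B p q) = 0

/-- The unified product bracket on `G × V` associated to an extending datum
`(◁, ▷, f, {-,-}) = (tl, tr, f, br)` of `G` through `V`. -/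
def unifiedBracket {k G V : Type*} [Field k] [LieRing G] [LieAlgebra k G]
    [AddCommGroup V] [Module k V]
    (tl : V →ₗ[k] G →ₗ[k] V) (tr : V →ₗ[k] G →ₗ[k] G)
    (f : V →ₗ[k] V →ₗ[k] G) (br : V →ₗ[k] V →ₗ[k] V) :
    G × V → G × V → G × V :=
  fun p q =>
    (⁅p.1, q.1⁆ + tr p.2 q.1 - tr q.2 p.1 + f p.2 q.2,
     br p.2 q.2 + tl p.2 q.1 - tl q.2 p.1)

/-- Theorem 2.2: the unified product is a Lie algebra iff (LE1)-(LE7) hold. -/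
theorem unifiedBracket_isLieBracket_iff {k G V : Type*} [Field k] [LieRing G]
    [LieAlgebra k G] [AddCommGroup V] [Module k V]
    (tl : V →ₗ[k] G →ₗ[k] V) (tr : V →ₗ[k] G →ₗ[k] G)
    (f : V →ₗ[k] V →ₗ[k] G) (br : V →ₗ[k] V →ₗ[k] V) :
    IsLieBracket (unifiedBracket tl tr f br) ↔
      ((∀ x : V, f x x = 0 ∧ br x x = 0) ∧
       (∀ (x : V) (g h : G), tl x ⁅g, h⁆ = tl (tl x g) h - tl (tl x h) g) ∧
       (∀ (x : V) (g h : G),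
          tr x ⁅g, h⁆ = ⁅tr x g, h⁆ + ⁅g, tr x h⁆ + tr (tl x g) h - tr (tl x h) g) ∧
       (∀ (x y : V) (g : G),
          tl (br x y) g = br x (tl y g) + br (tl x g) y + tl x (tr y g) - tl y (tr x g)) ∧
       (∀ (x y : V) (g : G),
          tr (br x y) g = tr x (tr y g) - tr y (tr x g) + ⁅g, f x y⁆
            + f x (tl y g) + f (tl x g) y) ∧
       (∀ x y z : V,
          f x (br y z) + f y (br z x) + f z (br x y)
            + tr x (f y z) + tr y (f z x) + tr z (f x y) = 0) ∧
       (∀ x y z : V,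
          br x (br y z) + br y (br z x) + br z (br x y)
            + tl x (f y z) + tl y (f z x) + tl z (f x y) = 0)) := by
  constructor
  · rintro ⟨h0, hJ⟩
    have h1 : ∀ x : V, f x x = 0 ∧ br x x = 0 := by
      intro x
      have := h0 (0, x)
      simpa [unifiedBracket, Prod.ext_iff] using this
    have fs : ∀ x y, f x y = - f y x := by
      intro x y
      have h := (h1 (x + y)).1
      simp only [map_add, LinearMap.add_apply, (h1 x).1, (h1 y).1] at h
      rw [eq_neg_iff_add_eq_zero, ← h]; abel
    have bs : ∀ x y, br x y = - br y x := by
      intro x y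
      have h := (h1 (x + y)).2
      simp only [map_add, LinearMap.add_apply, (h1 x).2, (h1 y).2] at h
      rw [eq_neg_iff_add_eq_zero, ← h]; abel
    have hA : ∀ (x : V) (g h : G), _ := fun x g h => hJ (0, x) (g, 0) (h, 0)
    have hB : ∀ (x y : V) (g : G), _ := fun x y g => hJ (0, x) (0, y) (g, 0)
    have hC : ∀ (x y z : V), _ := fun x y z => hJ (0, x) (0, y) (0, z)
    simp [unifiedBracket, Prod.ext_iff] at hA hB hC
    refine ⟨h1, ?_, ?_, ?_, ?_, ?_, ?_⟩
    · intro x g h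
      have := (hA x g h).2
      grind
    · intro x g h
      have := (hA x g h).1
      have e := lie_skew h (tr x g)
      have e2 := lie_skew g (tr x h)
      grind
    · intro x y g
      have := (hB x y g).2
      have e := bs y (tl x g)
      grind
    · intro x y g
      have := (hB x y g).1
      have e := fs y (tl x g)
      grind
    · intro x y z
      have := (hC x y z).1
      grind
    · intro x y z
      have := (hC x y z).2
      grind
  · rintro ⟨h1, h2, h3, h4, h5, h6, h7⟩
    have fs : ∀ x y, f x y = - f y x := by
      intro x y
      have h := (h1 (x + y)).1
      simp only [map_add, LinearMap.add_apply, (h1 x).1, (h1 y).1] at h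
      rw [eq_neg_iff_add_eq_zero, ← h]; abel
    have bs : ∀ x y, br x y = - br y x := by
      intro x y
      have h := (h1 (x + y)).2
      simp only [map_add, LinearMap.add_apply, (h1 x).2, (h1 y).2] at h
      rw [eq_neg_iff_add_eq_zero, ← h]; abel
    refine ⟨?_, ?_⟩
    · rintro ⟨a, x⟩
      simp [unifiedBracket, Prod.ext_iff, h1]
    · rintro ⟨a, x⟩ ⟨b, y⟩ ⟨c, z⟩
      simp only [unifiedBracket, Prod.ext_iff, Prod.fst_add, Prod.snd_add, Prod.fst_zero,
        Prod.snd_zero, map_add, map_sub, LinearMap.add_apply, LinearMap.sub_apply,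
        lie_add, lie_sub]
      constructor
      · rw [h3 x b c, h3 y c a, h3 z a b, h5 y z a, h5 z x b, h5 x y c,
          ← lie_skew c (tr x b), ← lie_skew a (tr y c), ← lie_skew b (tr z a),
          fs (tl y a) z, fs (tl z b) x, fs (tl x c) y]
        have e1 := lie_jacobi a b c
        have e2 := h6 x y z
        rw [← add_zero (0 : G)]
        nth_rewrite 1 [← e1]
        rw [← e2]
        abel
      · rw [h2 x b c, h2 y c a, h2 z a b, h4 y z a, h4 z x b, h4 x y c,
          bs (tl y a) z, bs (tl z b) x, bs (tl x c) y]
        rw [← h7 x y z]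
        abel
end

section
/- Let k be a field, g a Lie algebra over k, E a Lie algebra over k containing g as a Lie subalgebra, and p : E → g a k-linear retraction (p(g) = g for all g ∈ g). Set V := ker p and define bilinear maps by x ▷ g := p([x,g]), x ◁ g := [x,g] − p([x,g]), f(x,y) := p([x,y]) and {x,y} := [x,y] − p([x,y]) for all g ∈ g, x, y ∈ V (these take values in g and V respectively). Then the unified product bracket on g × V associated to (◁, ▷, f, {−,−}) is a Lie algebra bracket, and the map φ : g × V → E, φ(g,x) := g + x, is an isomorphism of Lie algebras from this unified product to E which stabilizes g (i.e. φ(g,0) = g for all g ∈ g) and co-stabilizes V (i.e. the V-component of φ⁻¹(e) is e − p(e) for all e ∈ E, equivalently the canonical projections onto V commute with φ). -/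
/-- The unified product bracket on `G × ker p` induced by a linear retraction
`p : E → G` of the inclusion `ι : G → E`, where `x ▷ g = p[x, g]`,
`x ◁ g = [x,g] - p[x,g]`, `f(x,y) = p[x,y]` and `{x,y} = [x,y] - p[x,y]`. -/
def retractionBracket {k G E : Type*} [Field k] [LieRing G] [LieAlgebra k G]
    [LieRing E] [LieAlgebra k E] (ι : G →ₗ⁅k⁆ E) (p : E →ₗ[k] G)
    (hp : ∀ a : G, p (ι a) = a) :
    G × LinearMap.ker p → G × LinearMap.ker p → G × LinearMap.ker p :=
  fun u w =>
    (⁅u.1, w.1⁆ + p ⁅(u.2 : E), ι w.1⁆ - p ⁅(w.2 : E), ι u.1⁆ + p ⁅(u.2 : E), (w.2 : E)⁆,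
     ⟨(⁅(u.2 : E), (w.2 : E)⁆ - ι (p ⁅(u.2 : E), (w.2 : E)⁆))
        + (⁅(u.2 : E), ι w.1⁆ - ι (p ⁅(u.2 : E), ι w.1⁆))
        - (⁅(w.2 : E), ι u.1⁆ - ι (p ⁅(w.2 : E), ι u.1⁆)),
      by simp [LinearMap.mem_ker, hp]⟩)

/-- Theorem 2.3: any Lie algebra `E` containing `G` as a Lie subalgebra is isomorphic,
via `φ(g,x) = g + x`, to the unified product of `G` with `V = ker p` associated to
the canonical extending datum induced by a linear retraction `p : E → G`; the
isomorphism stabilizes `G` and co-stabilizes `V`. -/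
theorem lie_algebra_containing_iso_unified_product {k G E : Type*} [Field k]
    [LieRing G] [LieAlgebra k G] [LieRing E] [LieAlgebra k E]
    (ι : G →ₗ⁅k⁆ E) (hι : Function.Injective ι)
    (p : E →ₗ[k] G) (hp : ∀ a : G, p (ι a) = a) :
    IsLieBracket (retractionBracket ι p hp) ∧
    ∃ φ : G × LinearMap.ker p → E,
      (∀ u : G × LinearMap.ker p, φ u = ι u.1 + (u.2 : E)) ∧
      (∀ u w : G × LinearMap.ker p, φ (retractionBracket ι p hp u w) = ⁅φ u, φ w⁆) ∧
      Function.Bijective φ ∧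
      (∀ a : G, φ (a, 0) = ι a) ∧
      (∀ u : G × LinearMap.ker p, φ u - ι (p (φ u)) = (u.2 : E)) := by
  have hker : ∀ x : LinearMap.ker p, p (x : E) = 0 := fun x => x.2
  have hbr : ∀ u w : G × LinearMap.ker p,
      ι (retractionBracket ι p hp u w).1 + ((retractionBracket ι p hp u w).2 : E) =
        ⁅ι u.1 + (u.2 : E), ι w.1 + (w.2 : E)⁆ := by
    intro u w
    simp only [retractionBracket, map_add, map_sub, LieHom.map_lie, add_lie, lie_add]
    rw [← lie_skew (ι u.1) (w.2 : E)]
    abel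
  have hinj : ∀ u w : G × LinearMap.ker p,
      ι u.1 + (u.2 : E) = ι w.1 + (w.2 : E) → u = w := by
    intro u w h
    have h1 : u.1 = w.1 := by
      have := congrArg p h
      simpa [hp, hker] using this
    refine Prod.ext h1 (Subtype.ext ?_)
    rw [h1] at h
    exact add_left_cancel h
  refine ⟨⟨?_, ?_⟩, fun u => ι u.1 + (u.2 : E), fun _ => rfl, hbr, ⟨fun u w h => hinj u w h, ?_⟩,
    ?_, ?_⟩
  · intro u
    apply hinj
    rw [hbr]
    simp
  · intro u v w
    apply hinj
    have hadd : ∀ a b : G × LinearMap.ker p,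
        ι (a + b).1 + ((a + b).2 : E) = (ι a.1 + (a.2 : E)) + (ι b.1 + (b.2 : E)) := by
      intro a b
      simp only [Prod.fst_add, Prod.snd_add, map_add, Submodule.coe_add]
      abel
    rw [hadd, hadd]
    simp only [hbr]
    rw [lie_jacobi]
    simp
  · intro e
    refine ⟨(p e, ⟨e - ι (p e), by simp [LinearMap.mem_ker, hp]⟩), ?_⟩
    simp
  · intro a
    simp
  · intro u
    simp [hp, hker]
end

section
/- Let k be a field, g a Lie algebra over k, V a k-vector space, and let Ω = (◁, ▷, f, {−,−}) and Ω' = (◁', ▷', f', {−,−}') be two Lie extending structures of g through V, with associated unified products g ⋈ V and g ⋈' V. For k-linear maps r : V → g and v : V → V, the linear map ψ : g × V → g × V defined by ψ(g,x) := (g + r(x), v(x)) is a morphism of Lie algebras from g ⋈ V to g ⋈' V if and only if for all g ∈ g and x, y ∈ V: (ML1) v(x) ◁' g = v(x ◁ g); (ML2) r(x ◁ g) = [r(x), g] − x ▷ g + v(x) ▷' g; (ML3) v({x,y}) = {v(x),v(y)}' + v(x) ◁' r(y) − v(y) ◁' r(x); (ML4) r({x,y}) = [r(x), r(y)] + v(x)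 ▷' r(y) − v(y) ▷' r(x) + f'(v(x),v(y)) − f(x,y). -/
/-- Lemma 2.4: `ψ(g,x) = (g + r(x), v(x))` is a morphism of Lie algebras between
two unified products iff (ML1)-(ML4) hold. -/
theorem morphism_unified_iff {k G V : Type*} [Field k] [LieRing G] [LieAlgebra k G]
    [AddCommGroup V] [Module k V]
    (tl : V →ₗ[k] G →ₗ[k] V) (tr : V →ₗ[k] G →ₗ[k] G)
    (f : V →ₗ[k] V →ₗ[k] G) (br : V →ₗ[k] V →ₗ[k] V)
    (tl' : V →ₗ[k] G →ₗ[k] V) (tr' : V →ₗ[k] G →ₗ[k] G)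
    (f' : V →ₗ[k] V →ₗ[k] G) (br' : V →ₗ[k] V →ₗ[k] V)
    (hΩ : IsLieBracket (unifiedBracket tl tr f br))
    (hΩ' : IsLieBracket (unifiedBracket tl' tr' f' br'))
    (r : V →ₗ[k] G) (v : V →ₗ[k] V) :
    (∀ u w : G × V,
        ((unifiedBracket tl tr f br u w).1 + r (unifiedBracket tl tr f br u w).2,
          v (unifiedBracket tl tr f br u w).2) =
        unifiedBracket tl' tr' f' br' (u.1 + r u.2, v u.2) (w.1 + r w.2, v w.2)) ↔
      ((∀ (x : V) (g : G), tl' (v x) g = v (tl x g)) ∧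
       (∀ (x : V) (g : G), r (tl x g) = ⁅r x, g⁆ - tr x g + tr' (v x) g) ∧
       (∀ x y : V, v (br x y) = br' (v x) (v y) + tl' (v x) (r y) - tl' (v y) (r x)) ∧
       (∀ x y : V, r (br x y) = ⁅r x, r y⁆ + tr' (v x) (r y) - tr' (v y) (r x)
          + f' (v x) (v y) - f x y)) := by
  constructor
  · intro h
    refine ⟨fun x g => ?_, fun x g => ?_, fun x y => ?_, fun x y => ?_⟩
    · have := congrArg Prod.snd (h (0, x) (g, 0))
      simp [unifiedBracket] at this
      exact this.symm
    · have := congrArg Prod.fst (h (0, x) (g, 0))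
      simp [unifiedBracket] at this
      rw [← sub_eq_zero] at this ⊢
      rw [← this]
      abel
    · have := congrArg Prod.snd (h (0, x) (0, y))
      simpa [unifiedBracket] using this
    · have := congrArg Prod.fst (h (0, x) (0, y))
      simp [unifiedBracket] at this
      rw [← this]
      abel
  · rintro ⟨h1, h2, h3, h4⟩ ⟨a, x⟩ ⟨b, y⟩
    ext
    · simp only [unifiedBracket, map_add, map_sub, h2, h4, lie_add, add_lie]
      rw [← lie_skew a (r y)]
      abel
    · simp only [unifiedBracket, map_add, map_sub, h3, ← h1]
      abel
end

section
/- Let k be a field, g a Lie algebra over k, V a k-vector space, and let Ω = (◁, ▷, f, {−,−}) and Ω' = (◁', ▷', f', {−,−}') be two Lie extending structures of g through V. There exists an isomorphism of Lie algebras ψ : g ⋈ V → g ⋈' V between the associated unified products which stabilizes g (ψ(g,0) = (g,0) for all g ∈ g) if and only if there exist a linear map r : V → g and a linear automorphism v of V such that for all g ∈ g and x, y ∈ V: x ◁' g = v(v⁻¹(x) ◁ g); x ▷' g = r(v⁻¹(x) ◁ g) + v⁻¹(x) ▷ g + [g, r(v⁻¹(x))]; f'(x,y) = f(v⁻¹(x),v⁻¹(y))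 + r({v⁻¹(x),v⁻¹(y)}) + [r(v⁻¹(x)), r(v⁻¹(y))] − r(v⁻¹(x) ◁ r(v⁻¹(y))) − v⁻¹(x) ▷ r(v⁻¹(y)) + r(v⁻¹(y) ◁ r(v⁻¹(x))) + v⁻¹(y) ▷ r(v⁻¹(x)); and {x,y}' = v({v⁻¹(x),v⁻¹(y)}) − v(v⁻¹(x) ◁ r(v⁻¹(y))) + v(v⁻¹(y) ◁ r(v⁻¹(x))). -/
/-- Two unified products are isomorphic via an isomorphism stabilizing `G` iff the
two Lie extending structures are equivalent (Definition 2.5 / Theorem 2.6). -/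
theorem isomorphic_stab_iff_equivalent {k G V : Type*} [Field k] [LieRing G]
    [LieAlgebra k G] [AddCommGroup V] [Module k V]
    (tl : V →ₗ[k] G →ₗ[k] V) (tr : V →ₗ[k] G →ₗ[k] G)
    (f : V →ₗ[k] V →ₗ[k] G) (br : V →ₗ[k] V →ₗ[k] V)
    (tl' : V →ₗ[k] G →ₗ[k] V) (tr' : V →ₗ[k] G →ₗ[k] G)
    (f' : V →ₗ[k] V →ₗ[k] G) (br' : V →ₗ[k] V →ₗ[k] V)
    (hΩ : IsLieBracket (unifiedBracket tl tr f br))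
    (hΩ' : IsLieBracket (unifiedBracket tl' tr' f' br')) :
    (∃ ψ : (G × V) ≃ₗ[k] G × V,
        (∀ u w : G × V, ψ (unifiedBracket tl tr f br u w) =
          unifiedBracket tl' tr' f' br' (ψ u) (ψ w)) ∧
        ∀ a : G, ψ (a, 0) = (a, 0)) ↔
      (∃ (r : V →ₗ[k] G) (v : V ≃ₗ[k] V),
        (∀ (x : V) (g : G), tl' x g = v (tl (v.symm x) g)) ∧
        (∀ (x : V) (g : G),
          tr' x g = r (tl (v.symm x) g) + tr (v.symm x) g + ⁅g, r (v.symm x)⁆) ∧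
        (∀ x y : V,
          f' x y = f (v.symm x) (v.symm y) + r (br (v.symm x) (v.symm y))
            + ⁅r (v.symm x), r (v.symm y)⁆
            - r (tl (v.symm x) (r (v.symm y))) - tr (v.symm x) (r (v.symm y))
            + r (tl (v.symm y) (r (v.symm x))) + tr (v.symm y) (r (v.symm x))) ∧
        (∀ x y : V,
          br' x y = v (br (v.symm x) (v.symm y))
            - v (tl (v.symm x) (r (v.symm y))) + v (tl (v.symm y) (r (v.symm x))))) := by
  constructor
  · rintro ⟨ψ, hψ, hs⟩
    let r : V →ₗ[k] G := LinearMap.fst k G V ∘ₗ ψ.toLinearMap ∘ₗ LinearMap.inr k G V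
    let v0 : V →ₗ[k] V := LinearMap.snd k G V ∘ₗ ψ.toLinearMap ∘ₗ LinearMap.inr k G V
    have key : ∀ (a : G) (x : V), ψ (a, x) = (a + r x, v0 x) := by
      intro a x
      have h : ((a, x) : G × V) = (a, 0) + (0, x) := by simp
      rw [h, map_add, hs]
      ext <;> simp [r, v0]
    have hinj : Function.Injective v0 := by
      rw [injective_iff_map_eq_zero]
      intro x hx
      have h : ψ (-r x, x) = 0 := by rw [key, hx]; simp
      have h2 := (LinearEquiv.map_eq_zero_iff ψ).1 h
      exact congrArg Prod.snd h2
    have hsurj : Function.Surjective v0 := by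
      intro w
      obtain ⟨⟨a, x⟩, hx⟩ := ψ.surjective (0, w)
      rw [key] at hx
      exact ⟨x, congrArg Prod.snd hx⟩
    let v : V ≃ₗ[k] V := LinearEquiv.ofBijective v0 ⟨hinj, hsurj⟩
    have key2 : ∀ (a : G) (x : V), ψ (a, x) = (a + r x, v x) := key
    clear_value v r
    have h1 : ∀ (x : V) (g : G), tr x g + r (tl x g) = ⁅r x, g⁆ + tr' (v x) g ∧
        v (tl x g) = tl' (v x) g := by
      intro x g
      have h := hψ (0, x) (g, 0)
      simpa [unifiedBracket, key2] using h
    have h2 : ∀ (x y : V), f x y + r (br x y) =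
        ⁅r x, r y⁆ + tr' (v x) (r y) - tr' (v y) (r x) + f' (v x) (v y) ∧
        v (br x y) = br' (v x) (v y) + tl' (v x) (r y) - tl' (v y) (r x) := by
      intro x y
      have h := hψ (0, x) (0, y)
      simpa [unifiedBracket, key2] using h
    have e2 : ∀ (x : V) (g : G), tr' (v x) g = r (tl x g) + tr x g + ⁅g, r x⁆ := by
      intro x g
      rw [← lie_skew g (r x), add_comm (r (tl x g)), (h1 x g).1]
      abel
    refine ⟨r, v, ?_, ?_, ?_, ?_⟩
    · intro x g
      obtain ⟨x, rfl⟩ := v.surjective x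
      simp [(h1 x g).2]
    · intro x g
      obtain ⟨x, rfl⟩ := v.surjective x
      simp [e2]
    · intro x y
      obtain ⟨x, rfl⟩ := v.surjective x
      obtain ⟨y, rfl⟩ := v.surjective y
      simp only [LinearEquiv.symm_apply_apply]
      rw [(h2 x y).1, e2, e2, ← lie_skew (r y) (r x)]
      abel
    · intro x y
      obtain ⟨x, rfl⟩ := v.surjective x
      obtain ⟨y, rfl⟩ := v.surjective y
      simp only [LinearEquiv.symm_apply_apply]
      rw [(h2 x y).2, (h1 x _).2, (h1 y _).2]
      abel
  · rintro ⟨r, v, h1, h2, h3, h4⟩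
    let ψ : (G × V) ≃ₗ[k] G × V :=
      { toFun := fun p => (p.1 + r p.2, v p.2)
        invFun := fun p => (p.1 - r (v.symm p.2), v.symm p.2)
        map_add' := by
          intro p q
          ext
          · simp; abel
          · simp
        map_smul' := by
          intro c p
          ext <;> simp
        left_inv := by intro p; simp
        right_inv := by intro p; simp }
    have key : ∀ p : G × V, ψ p = (p.1 + r p.2, v p.2) := fun _ => rfl
    refine ⟨ψ, ?_, ?_⟩
    · rintro ⟨a, x⟩ ⟨b, y⟩
      simp only [key, unifiedBracket, h1, h2, h3, h4, LinearEquiv.symm_apply_apply, map_add,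
        map_sub, add_lie, lie_add, Prod.mk.injEq]
      constructor
      · rw [← lie_skew (r x) b, ← lie_skew (r y) (r x)]
        have : ⁅r x, r x⁆ = 0 := lie_self _
        abel
      · abel
    · intro a
      simp [key]
end

section
/- Let k be a field, g a Lie algebra over k, V a k-vector space, and let Ω = (◁, ▷, f, {−,−}) and Ω' = (◁', ▷', f', {−,−}') be two Lie extending structures of g through V. There exists an isomorphism of Lie algebras ψ : g ⋈ V → g ⋈' V between the associated unified products which stabilizes g (ψ(g,0) = (g,0) for all g ∈ g) and co-stabilizes V (the V-component of ψ(g,x) is x) if and only if ◁' = ◁ and there exists a linear map r : V → g such that for all g ∈ g and x, y ∈ V: x ▷' g = x ▷ g + r(x ◁ g) − [r(x), g]; f'(x,y) = f(x,y) + r({x,y}) + [r(x), r(y)] + y ▷ r(x) − x ▷ r(y) + r(y ◁ r(x)) − r(x ◁ r(y)); and {x,y}' = {x,y} − x ◁ r(y) + y ◁ r(x). -/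
/-- Two unified products are isomorphic via an isomorphism stabilizing `G` and
co-stabilizing `V` iff the two Lie extending structures are cohomologous
(Remark 2.7). -/
theorem isomorphic_stab_costab_iff_cohomologous {k G V : Type*} [Field k] [LieRing G]
    [LieAlgebra k G] [AddCommGroup V] [Module k V]
    (tl : V →ₗ[k] G →ₗ[k] V) (tr : V →ₗ[k] G →ₗ[k] G)
    (f : V →ₗ[k] V →ₗ[k] G) (br : V →ₗ[k] V →ₗ[k] V)
    (tl' : V →ₗ[k] G →ₗ[k] V) (tr' : V →ₗ[k] G →ₗ[k] G)
    (f' : V →ₗ[k] V →ₗ[k] G) (br' : V →ₗ[k] V →ₗ[k] V)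
    (hΩ : IsLieBracket (unifiedBracket tl tr f br))
    (hΩ' : IsLieBracket (unifiedBracket tl' tr' f' br')) :
    (∃ ψ : (G × V) ≃ₗ[k] G × V,
        (∀ u w : G × V, ψ (unifiedBracket tl tr f br u w) =
          unifiedBracket tl' tr' f' br' (ψ u) (ψ w)) ∧
        (∀ a : G, ψ (a, 0) = (a, 0)) ∧
        (∀ u : G × V, (ψ u).2 = u.2)) ↔
      (tl' = tl ∧
        ∃ r : V →ₗ[k] G,
          (∀ (x : V) (g : G), tr' x g = tr x g + r (tl x g) - ⁅r x, g⁆) ∧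
          (∀ x y : V,
            f' x y = f x y + r (br x y) + ⁅r x, r y⁆
              + tr y (r x) - tr x (r y) + r (tl y (r x)) - r (tl x (r y))) ∧
          (∀ x y : V, br' x y = br x y - tl x (r y) + tl y (r x))) := by
  constructor
  · rintro ⟨ψ, hψ, h1, h2⟩
    obtain ⟨r, hr⟩ : ∃ r : V →ₗ[k] G, ∀ x, r x = (ψ (0, x)).1 :=
      ⟨(LinearMap.fst k G V).comp (ψ.toLinearMap.comp (LinearMap.inr k G V)), fun x => rfl⟩
    have key : ∀ (a : G) (x : V), ψ (a, x) = (a + r x, x) := by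
      intro a x
      have e : ((a, x) : G × V) = (a, 0) + (0, x) := by simp
      refine Prod.ext ?_ (h2 _)
      rw [e, map_add, h1, hr]
      rfl
    have htl : ∀ x g, tl' x g = tl x g := by
      intro x g
      have h := congrArg Prod.snd (hψ (0, x) (g, 0))
      simp [unifiedBracket, key] at h
      exact h.symm
    have htr : ∀ x g, tr' x g = tr x g + r (tl x g) - ⁅r x, g⁆ := by
      intro x g
      have h := congrArg Prod.fst (hψ (0, x) (g, 0))
      simp [unifiedBracket, key] at h
      rw [h]; abel
    refine ⟨LinearMap.ext fun x => LinearMap.ext fun g => htl x g, r, htr, ?_, ?_⟩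
    · intro x y
      have h := congrArg Prod.fst (hψ (0, x) (0, y))
      simp [unifiedBracket, key, htr] at h
      rw [← lie_skew (r x) (r y)]
      rw [h]; abel
    · intro x y
      have h := congrArg Prod.snd (hψ (0, x) (0, y))
      simp [unifiedBracket, key, htl] at h
      rw [h]; abel
  · rintro ⟨rfl, r, htr, hf, hbr⟩
    let ψ : (G × V) ≃ₗ[k] G × V :=
      { toFun := fun p => (p.1 + r p.2, p.2)
        invFun := fun p => (p.1 - r p.2, p.2)
        map_add' := by
          intro p q
          ext
          · simp; abel
          · simp
        map_smul' := by
          intro c p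
          ext <;> simp
        left_inv := by intro p; simp
        right_inv := by intro p; simp }
    have key : ∀ p, ψ p = (p.1 + r p.2, p.2) := fun _ => rfl
    refine ⟨ψ, ?_, ?_, ?_⟩
    · rintro ⟨a, x⟩ ⟨b, y⟩
      rw [key, key, key]
      ext
      · simp only [unifiedBracket, htr, hf, map_add, map_sub, lie_add, add_lie]
        rw [← lie_skew (r x) (r y), ← lie_skew (r y) a]
        abel
      · simp only [unifiedBracket, hbr, map_add]
        abel
    · intro a; simp [key]
    · intro u; rfl
end

section
/- Let k be a field, g a Lie algebra over k, V a k-vector space, and let (◁, ▷, f, {−,−}) be an extending datum of g through V in which ◁ is the trivial map (x ◁ g = 0 for all x, g). Then the unified product bracket [(g,x),(h,y)] = ([g,h] + x ▷ h − y ▷ g + f(x,y), {x,y}) is a Lie algebra bracket on g × V if and only if (V, {−,−}) is a Lie algebra and for all g, h ∈ g and x, y, z ∈ V: f(x,x) = 0; x ▷ [g,h] = [x ▷ g, h] + [g, x ▷ h]; {x,y} ▷ g = x ▷ (y ▷ g) − y ▷ (x ▷ g) + [g, f(x,y)]; and f(x,{y,z}) + f(y,{z,x}) + f(z,{x,y})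 + x ▷ f(y,z) + y ▷ f(z,x) + z ▷ f(x,y) = 0. -/
/-- The crossed product bracket
`[(g,x),(h,y)] = ([g,h] + x ▷ h - y ▷ g + f(x,y), {x,y})` on `G × V`,
i.e. the unified product bracket when the action `◁` is trivial. -/
def crossedProductBracket {k G V : Type*} [Field k] [LieRing G] [LieAlgebra k G]
    [AddCommGroup V] [Module k V]
    (tr : V →ₗ[k] G →ₗ[k] G) (f : V →ₗ[k] V →ₗ[k] G) (br : V →ₗ[k] V →ₗ[k] V) :
    G × V → G × V → G × V :=
  fun p q => (⁅p.1, q.1⁆ + tr p.2 q.1 - tr q.2 p.1 + f p.2 q.2, br p.2 q.2)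

/-- Section 3 (crossed products): when `◁` is trivial, the unified product is a Lie
algebra iff `(V, {-,-})` is a Lie algebra and `(G, V, ▷, f)` is a crossed system. -/
theorem crossedProduct_isLieBracket_iff {k G V : Type*} [Field k] [LieRing G]
    [LieAlgebra k G] [AddCommGroup V] [Module k V]
    (tr : V →ₗ[k] G →ₗ[k] G) (f : V →ₗ[k] V →ₗ[k] G) (br : V →ₗ[k] V →ₗ[k] V) :
    IsLieBracket (crossedProductBracket tr f br) ↔
      (((∀ x : V, br x x = 0) ∧
        ∀ x y z : V, br x (br y z) + br y (br z x) + br z (br x y) = 0) ∧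
       (∀ x : V, f x x = 0) ∧
       (∀ (x : V) (g h : G), tr x ⁅g, h⁆ = ⁅tr x g, h⁆ + ⁅g, tr x h⁆) ∧
       (∀ (x y : V) (g : G),
          tr (br x y) g = tr x (tr y g) - tr y (tr x g) + ⁅g, f x y⁆) ∧
       (∀ x y z : V,
          f x (br y z) + f y (br z x) + f z (br x y)
            + tr x (f y z) + tr y (f z x) + tr z (f x y) = 0)) := by
  constructor
  · rintro ⟨h1, h2⟩
    simp only [crossedProductBracket, Prod.ext_iff, Prod.forall] at h1 h2
    refine ⟨⟨fun x => ?_, fun x y z => ?_⟩, fun x => ?_, fun x g h => ?_, fun x y g => ?_,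
      fun x y z => ?_⟩
    · simpa using (h1 0 x).2
    · simpa using (h2 0 x 0 y 0 z).2
    · simpa using (h1 0 x).1
    · have e := (h2 g 0 h 0 0 x).1
      simp at e
      rw [← lie_skew (tr x g), ← lie_skew g (tr x h)]
      linear_combination (norm := abel) e
    · have h := (h2 g 0 0 x 0 y).1
      simp at h
      linear_combination (norm := abel) -h
    · have h := (h2 0 x 0 y 0 z).1
      simp at h
      linear_combination (norm := abel) h
  · rintro ⟨⟨b1, b2⟩, f1, t1, t2, c⟩
    refine ⟨?_, ?_⟩
    · rintro ⟨g, x⟩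
      simp [crossedProductBracket, b1, f1]
    · rintro ⟨g, x⟩ ⟨h, y⟩ ⟨l, z⟩
      have J := lie_jacobi g h l
      have C := c x y z
      have B := b2 x y z
      simp only [crossedProductBracket, Prod.mk_add_mk, Prod.mk_eq_zero]
      refine ⟨?_, B⟩
      simp only [lie_add, lie_sub, map_add, map_sub, t1, t2]
      rw [← lie_skew (tr x h), ← lie_skew (tr y l), ← lie_skew (tr z g)]
      linear_combination (norm := abel) J + C
end

section
/- Let k be a field, E a Lie algebra over k, and g ⊆ E a Lie ideal of E. Let p : E → g be a k-linear retraction and V := ker p. Then there exist a Lie algebra bracket {−,−} on V and bilinear maps ▷ : V × g → g, f : V × V → g forming a crossed system (i.e. the bracket [(g,x),(h,y)] = ([g,h] + x ▷ h − y ▷ g + f(x,y), {x,y}) is a Lie algebra bracket on g × V), such that the map φ : g × V → E, φ(g,x) := g + x, is an isomorphism of Lie algebras from this crossed product to E which stabilizes g (φ(g,0) = g for all g ∈ g). Explicitly one may take x ▷ g := p([x,g]) = [x,g], f(x,y) := p([x,y]) and {x,y} := [x,y] − p([x,y]); in particular the map x ◁ g := [x,g] − p([x,g]) is identically zero because g is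 an ideal. -/
/-- The crossed product bracket on `G × ker p` induced by a linear retraction
`p : E → G` of the inclusion `ι : G → E` of an ideal, where `x ▷ g = p[x, g]`,
`f(x,y) = p[x,y]` and `{x,y} = [x,y] - p[x,y]`. -/
def idealCrossedBracket {k G E : Type*} [Field k] [LieRing G] [LieAlgebra k G]
    [LieRing E] [LieAlgebra k E] (ι : G →ₗ⁅k⁆ E) (p : E →ₗ[k] G)
    (hp : ∀ a : G, p (ι a) = a) :
    G × LinearMap.ker p → G × LinearMap.ker p → G × LinearMap.ker p :=
  fun u w =>
    (⁅u.1, w.1⁆ + p ⁅(u.2 : E), ι w.1⁆ - p ⁅(w.2 : E), ι u.1⁆ + p ⁅(u.2 : E), (w.2 : E)⁆,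
     ⟨⁅(u.2 : E), (w.2 : E)⁆ - ι (p ⁅(u.2 : E), (w.2 : E)⁆),
      by simp [LinearMap.mem_ker, hp]⟩)

/-- Corollary 3.1: if `G` is an ideal of `E`, then `E` is isomorphic, via
`φ(g,x) = g + x`, to a crossed product `G #^f V` with `V = ker p`; the action
`◁` is identically zero because `G` is an ideal, i.e. `p[x,g] = [x,g]`. -/
theorem ideal_iso_crossed_product {k G E : Type*} [Field k]
    [LieRing G] [LieAlgebra k G] [LieRing E] [LieAlgebra k E]
    (ι : G →ₗ⁅k⁆ E) (hι : Function.Injective ι)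
    (hideal : ∀ (e : E) (a : G), ∃ b : G, ι b = ⁅e, ι a⁆)
    (p : E →ₗ[k] G) (hp : ∀ a : G, p (ι a) = a) :
    (∀ (x : LinearMap.ker p) (a : G), ι (p ⁅(x : E), ι a⁆) = ⁅(x : E), ι a⁆) ∧
    IsLieBracket (idealCrossedBracket ι p hp) ∧
    ∃ φ : G × LinearMap.ker p → E,
      (∀ u : G × LinearMap.ker p, φ u = ι u.1 + (u.2 : E)) ∧
      (∀ u w : G × LinearMap.ker p, φ (idealCrossedBracket ι p hp u w) = ⁅φ u, φ w⁆) ∧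
      Function.Bijective φ ∧
      (∀ a : G, φ (a, 0) = ι a) := by
  have h1 : ∀ (e : E) (a : G), ι (p ⁅e, ι a⁆) = ⁅e, ι a⁆ := by
    intro e a
    obtain ⟨b, hb⟩ := hideal e a
    rw [← hb, hp]
  have hinj : ∀ u w : G × LinearMap.ker p,
      ι u.1 + (u.2 : E) = ι w.1 + (w.2 : E) → u = w := by
    rintro ⟨a, x, hx⟩ ⟨b, y, hy⟩ h
    rw [LinearMap.mem_ker] at hx hy
    simp only at h
    have hab : a = b := by
      have := congrArg p h
      simpa [hp, hx, hy] using this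
    subst hab
    have hxy : x = y := add_left_cancel h
    subst hxy
    rfl
  have hbr : ∀ u w : G × LinearMap.ker p,
      ι (idealCrossedBracket ι p hp u w).1 + ((idealCrossedBracket ι p hp u w).2 : E)
        = ⁅ι u.1 + (u.2 : E), ι w.1 + (w.2 : E)⁆ := by
    intro u w
    simp only [idealCrossedBracket, map_add, map_sub, LieHom.map_lie, h1,
      add_lie, lie_add]
    rw [← lie_skew (ι u.1) (w.2 : E)]
    abel
  refine ⟨fun x a => h1 x a, ⟨?_, ?_⟩, fun u => ι u.1 + (u.2 : E), fun _ => rfl, hbr,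
    ⟨fun u w h => hinj u w h, ?_⟩, ?_⟩
  · intro u
    apply hinj
    rw [hbr]
    simp
  · intro u v w
    apply hinj
    have hadd : ∀ a b : G × LinearMap.ker p, ι (a + b).1 + ((a + b).2 : E)
        = (ι a.1 + (a.2 : E)) + (ι b.1 + (b.2 : E)) := by
      intro a b
      simp only [Prod.fst_add, Prod.snd_add, map_add, Submodule.coe_add]
      abel
    rw [hadd, hadd]
    simp only [hbr]
    rw [lie_jacobi]
    simp
  · intro e
    refine ⟨(p e, ⟨e - ι (p e), by simp [LinearMap.mem_ker, hp]⟩), ?_⟩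
    simp
  · intro a
    simp
end

section
/- Let k be a field, g a Lie algebra over k, V a k-vector space, and let (◁, ▷, f, {−,−}) be an extending datum of g through V in which f is the trivial map (f(x,y) = 0 for all x, y ∈ V). Then the unified product bracket [(g,x),(h,y)] = ([g,h] + x ▷ h − y ▷ g, {x,y} + x ◁ h − y ◁ g) is a Lie algebra bracket on g × V if and only if (V, {−,−}) is a Lie algebra, g is a left V-module under ▷ (i.e. {x,y} ▷ g = x ▷ (y ▷ g) − y ▷ (x ▷ g)), V is a right g-module under ◁ (i.e. x ◁ [g,h] = (x ◁ g) ◁ h − (x ◁ h) ◁ g), and for all g, h ∈ g and x, y ∈ V: x ▷ [g,h] = [x ▷ g, h] + [g, x ▷ h] + (x ◁ g) ▷ h − (x ◁ h) ▷ g, and {x,y} ◁ g = {x, y ◁ g} + {x ◁ g, y} + x ◁ (y ▷ g) − y ◁ (x ▷ g). -/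
/-- The bicrossed product bracket
`[(g,x),(h,y)] = ([g,h] + x ▷ h - y ▷ g, {x,y} + x ◁ h - y ◁ g)` on `G × V`,
i.e. the unified product bracket when the cocycle `f` is trivial. -/
def bicrossedProductBracket {k G V : Type*} [Field k] [LieRing G] [LieAlgebra k G]
    [AddCommGroup V] [Module k V]
    (tl : V →ₗ[k] G →ₗ[k] V) (tr : V →ₗ[k] G →ₗ[k] G) (br : V →ₗ[k] V →ₗ[k] V) :
    G × V → G × V → G × V :=
  fun p q =>
    (⁅p.1, q.1⁆ + tr p.2 q.1 - tr q.2 p.1,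
     br p.2 q.2 + tl p.2 q.1 - tl q.2 p.1)

/-- Section 3 (bicrossed products): when `f` is trivial, the unified product is a Lie
algebra iff `(V, {-,-})` is a Lie algebra and `(G, V, ◁, ▷)` is a matched pair. -/
theorem bicrossedProduct_isLieBracket_iff {k G V : Type*} [Field k] [LieRing G]
    [LieAlgebra k G] [AddCommGroup V] [Module k V]
    (tl : V →ₗ[k] G →ₗ[k] V) (tr : V →ₗ[k] G →ₗ[k] G) (br : V →ₗ[k] V →ₗ[k] V) :
    IsLieBracket (bicrossedProductBracket tl tr br) ↔
      (((∀ x : V, br x x = 0) ∧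
        ∀ x y z : V, br x (br y z) + br y (br z x) + br z (br x y) = 0) ∧
       (∀ (x y : V) (g : G), tr (br x y) g = tr x (tr y g) - tr y (tr x g)) ∧
       (∀ (x : V) (g h : G), tl x ⁅g, h⁆ = tl (tl x g) h - tl (tl x h) g) ∧
       (∀ (x : V) (g h : G),
          tr x ⁅g, h⁆ = ⁅tr x g, h⁆ + ⁅g, tr x h⁆ + tr (tl x g) h - tr (tl x h) g) ∧
       (∀ (x y : V) (g : G),
          tl (br x y) g = br x (tl y g) + br (tl x g) y + tl x (tr y g) - tl y (tr x g))) := by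
  constructor
  · rintro ⟨h0, hJ⟩
    have hs : ∀ x : V, br x x = 0 := by
      intro x
      have := congrArg Prod.snd (h0 (0, x))
      simpa [bicrossedProductBracket] using this
    have sk : ∀ x y : V, br x y = - br y x := by
      intro x y
      have := hs (x + y)
      simp only [map_add, LinearMap.add_apply, hs] at this
      linear_combination (norm := module) this
    refine ⟨⟨hs, ?_⟩, ?_, ?_, ?_, ?_⟩
    · intro x y z
      have := congrArg Prod.snd (hJ (0, x) (0, y) (0, z))
      simpa [bicrossedProductBracket] using this
    · intro x y g
      have := congrArg Prod.fst (hJ (0, x) (0, y) (g, 0))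
      simp [bicrossedProductBracket] at this
      linear_combination (norm := module) -this
    · intro x g h
      have := congrArg Prod.snd (hJ (0, x) (g, 0) (h, 0))
      simp [bicrossedProductBracket] at this
      linear_combination (norm := module) this
    · intro x g h
      have := congrArg Prod.fst (hJ (0, x) (g, 0) (h, 0))
      simp [bicrossedProductBracket] at this
      have e := lie_skew (tr x g) h
      linear_combination (norm := module) this + e + lie_skew g (tr x h)
    · intro x y g
      have := congrArg Prod.snd (hJ (0, x) (0, y) (g, 0))
      simp [bicrossedProductBracket] at this
      have e := sk y (tl x g)
      linear_combination (norm := module) -this - e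
  · rintro ⟨⟨hs, hj⟩, h1, h2, h3, h4⟩
    have sk : ∀ x y : V, br x y = - br y x := by
      intro x y
      have := hs (x + y)
      simp only [map_add, LinearMap.add_apply, hs] at this
      linear_combination (norm := module) this
    refine ⟨?_, ?_⟩
    · rintro ⟨g, x⟩
      simp [bicrossedProductBracket, hs]
    · rintro ⟨a, x⟩ ⟨b, y⟩ ⟨c, z⟩
      ext
      · simp only [bicrossedProductBracket, Prod.fst_add, Prod.fst_zero, map_add, map_sub,
          LinearMap.add_apply, LinearMap.sub_apply, h1, h3, lie_add, lie_sub]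
        have e := lie_jacobi a b c
        rw [← lie_skew (tr x b) c, ← lie_skew (tr y c) a, ← lie_skew (tr z a) b]
        linear_combination (norm := module) e
      · simp only [bicrossedProductBracket, Prod.snd_add, Prod.snd_zero, map_add, map_sub,
          LinearMap.add_apply, LinearMap.sub_apply, h2, h4]
        have e := hj x y z
        rw [sk (tl y a) z, sk (tl z b) x, sk (tl x c) y]
        linear_combination (norm := module) e
end

section
/- Let k be a field of characteristic ≠ 2 and let (g, h, ◁, ▷) be a matched pair of Lie algebras over k, with bicrossed product g ⨝ h the Lie algebra on g × h with bracket [(g,x),(h,y)] = ([g,h] + x ▷ h − y ▷ g, {x,y} + x ◁ h − y ◁ g), where {−,−} denotes the bracket of h. Then the linear map J : g ⨝ h → g ⨝ h defined by J(g,x) := (g, −x) satisfies J ∘ J = Id and is integrable, i.e. J([a,b]) = [J(a), b] + [a, J(b)] − J([J(a), J(b)]) for all a, b ∈ g ⨝ h. -/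
/-- The bicrossed product bracket of a matched pair `(G, H, ◁, ▷)` of Lie algebras:
`[(g,x),(h,y)] = ([g,h] + x ▷ h - y ▷ g, [x,y] + x ◁ h - y ◁ g)`. -/
def matchedPairBracket {k G H : Type*} [Field k] [LieRing G] [LieAlgebra k G]
    [LieRing H] [LieAlgebra k H]
    (tl : H →ₗ[k] G →ₗ[k] H) (tr : H →ₗ[k] G →ₗ[k] G) :
    G × H → G × H → G × H :=
  fun p q =>
    (⁅p.1, q.1⁆ + tr p.2 q.1 - tr q.2 p.1,
     ⁅p.2, q.2⁆ + tl p.2 q.1 - tl q.2 p.1)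

/-- Remark 3.3: for a matched pair of Lie algebras over a field of characteristic
`≠ 2`, the map `J(g,x) = (g,-x)` is a complex product structure on the bicrossed
product: `J ∘ J = Id` and `J` is integrable. -/
theorem bicrossed_complex_product_structure {k G H : Type*} [Field k]
    [LieRing G] [LieAlgebra k G] [LieRing H] [LieAlgebra k H]
    (hchar : (2 : k) ≠ 0)
    (tl : H →ₗ[k] G →ₗ[k] H) (tr : H →ₗ[k] G →ₗ[k] G)
    (hmodG : ∀ (x y : H) (g : G), tr ⁅x, y⁆ g = tr x (tr y g) - tr y (tr x g))
    (hmodH : ∀ (x : H) (g h : G), tl x ⁅g, h⁆ = tl (tl x g) h - tl (tl x h) g)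
    (hmp1 : ∀ (x : H) (g h : G),
      tr x ⁅g, h⁆ = ⁅tr x g, h⁆ + ⁅g, tr x h⁆ + tr (tl x g) h - tr (tl x h) g)
    (hmp2 : ∀ (x y : H) (g : G),
      tl ⁅x, y⁆ g = ⁅x, tl y g⁆ + ⁅tl x g, y⁆ + tl x (tr y g) - tl y (tr x g)) :
    (∀ u : G × H, (fun w : G × H => (w.1, -w.2)) ((fun w : G × H => (w.1, -w.2)) u) = u) ∧
    (∀ u w : G × H,
      (fun z : G × H => (z.1, -z.2)) (matchedPairBracket tl tr u w) =
        matchedPairBracket tl tr (u.1, -u.2) w + matchedPairBracket tl tr u (w.1, -w.2)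
          - (fun z : G × H => (z.1, -z.2))
              (matchedPairBracket tl tr (u.1, -u.2) (w.1, -w.2))) := by
  refine ⟨fun u => by simp, fun u w => ?_⟩
  ext
  · simp [matchedPairBracket]
  · simp only [matchedPairBracket, Prod.snd_add, Prod.snd_sub, neg_lie, lie_neg, map_neg,
      LinearMap.neg_apply]
    abel
end

section
/- Let k be a field, g a Lie algebra over k, and let (λ, D) and (λ', D') be twisted derivations of g, with associated Lie algebras g ⋈_{(λ,D)} k and g ⋈_{(λ',D')} k on g × k with bracket [(g,a),(h,b)] = ([g,h] + a·D(h) − b·D(g), a·λ(h) − b·λ(g)) (respectively with (λ', D')). There exists an isomorphism of Lie algebras g ⋈_{(λ,D)} k → g ⋈_{(λ',D')} k which stabilizes g (i.e. maps (g,0) to (g,0) for all g ∈ g) if and only if λ = λ' and there exist g₀ ∈ g and a nonzero scalar q ∈ k such that D(h) = q·D'(h) + [g₀, h] − λ(h)·g₀ for all h ∈ g. -/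
/-- The bracket of `G ⋈_{(λ,D)} k` on `G × k`. -/
def twDerBracket {k G : Type*} [Field k] [LieRing G] [LieAlgebra k G]
    (lam : G →ₗ[k] k) (D : G →ₗ[k] G) : G × k → G × k → G × k :=
  fun u w =>
    (⁅u.1, w.1⁆ + u.2 • D w.1 - w.2 • D u.1, u.2 * lam w.1 - w.2 * lam u.1)

/-- Theorem 4.6 (part): there is a Lie algebra isomorphism
`G ⋈_{(λ,D)} k → G ⋈_{(λ',D')} k` stabilizing `G` iff `λ = λ'` and there exist
`g₀ ∈ G`, `q ∈ k*` with `D(h) = q·D'(h) + [g₀,h] - λ(h)·g₀` for all `h`. -/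
theorem twDer_iso_stab_iff {k G : Type*} [Field k] [LieRing G] [LieAlgebra k G]
    (lam lam' : G →ₗ[k] k) (D D' : G →ₗ[k] G)
    (hlam : ∀ g h : G, lam ⁅g, h⁆ = 0)
    (hD : ∀ g h : G, D ⁅g, h⁆ = ⁅D g, h⁆ + ⁅g, D h⁆ + lam g • D h - lam h • D g)
    (hlam' : ∀ g h : G, lam' ⁅g, h⁆ = 0)
    (hD' : ∀ g h : G, D' ⁅g, h⁆ = ⁅D' g, h⁆ + ⁅g, D' h⁆ + lam' g • D' h - lam' h • D' g) :
    (∃ ψ : (G × k) ≃ₗ[k] G × k,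
        (∀ u w : G × k, ψ (twDerBracket lam D u w) =
          twDerBracket lam' D' (ψ u) (ψ w)) ∧
        ∀ g : G, ψ (g, 0) = (g, 0)) ↔
      (lam = lam' ∧ ∃ (g₀ : G) (q : k), q ≠ 0 ∧
        ∀ h : G, D h = q • D' h + ⁅g₀, h⁆ - lam h • g₀) := by
  constructor
  · rintro ⟨ψ, hψ, hs⟩
    have hq : (ψ (0, 1)).2 ≠ 0 := by
      intro h0
      have h1 : ψ ((ψ (0, 1)).1, 0) = ψ (0, 1) := by
        rw [hs]
        exact Prod.ext rfl h0.symm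
      have h2 := congrArg Prod.snd (ψ.injective h1)
      exact zero_ne_one h2
    have hdec : ∀ (g : G) (a : k), ψ (g, a) = (g + a • (ψ (0, 1)).1, a * (ψ (0, 1)).2) := by
      intro g a
      have h1 : ((g, a) : G × k) = (g, 0) + a • ((0, 1) : G × k) := by
        ext <;> simp
      rw [h1, map_add, map_smul, hs]
      ext <;> simp
    have key : ∀ h : G, D h + lam h • (ψ (0, 1)).1 = ⁅(ψ (0, 1)).1, h⁆ + (ψ (0, 1)).2 • D' h ∧
        lam h * (ψ (0, 1)).2 = (ψ (0, 1)).2 * lam' h := by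
      intro h
      have h1 := hψ (0, 1) (h, 0)
      rw [hs] at h1
      have h2 : twDerBracket lam D (0, 1) (h, 0) = (D h, lam h) := by
        simp [twDerBracket]
      rw [h2, hdec (D h) (lam h)] at h1
      have h3 := congrArg Prod.fst h1
      have h4 := congrArg Prod.snd h1
      simp only [twDerBracket, zero_smul, sub_zero, zero_mul] at h3 h4
      exact ⟨h3, h4⟩
    refine ⟨?_, (ψ (0, 1)).1, (ψ (0, 1)).2, hq, ?_⟩
    · ext h
      have := (key h).2
      rw [mul_comm] at this
      exact mul_left_cancel₀ hq this
    · intro h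
      rw [eq_sub_iff_add_eq, (key h).1, add_comm]
  · rintro ⟨rfl, g₀, q, hq, h⟩
    refine ⟨{ toFun := fun u => (u.1 + u.2 • g₀, q * u.2)
              invFun := fun u => (u.1 - (q⁻¹ * u.2) • g₀, q⁻¹ * u.2)
              map_add' := ?_
              map_smul' := ?_
              left_inv := ?_
              right_inv := ?_ }, ?_, ?_⟩
    · intro u w
      ext
      · simp only [Prod.fst_add, Prod.snd_add]
        module
      · simp [mul_add]
    · intro c u
      ext
      · simp only [Prod.smul_fst, Prod.smul_snd, RingHom.id_apply, smul_eq_mul]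
        module
      · simp only [Prod.smul_snd, RingHom.id_apply, smul_eq_mul]
        ring
    · intro u
      ext <;> simp [hq]
    · intro u
      ext <;> simp [hq]
    · rintro ⟨u, a⟩ ⟨w, b⟩
      ext
      · simp only [twDerBracket, LinearEquiv.coe_mk, LinearMap.coe_mk, AddHom.coe_mk, h u, h w,
          map_add, map_smul, add_lie, lie_add, smul_lie, lie_smul, lie_self]
        rw [← lie_skew u g₀]
        module
      · simp only [twDerBracket, LinearEquiv.coe_mk, LinearMap.coe_mk, AddHom.coe_mk,
          map_add, map_smul, smul_eq_mul]
        ring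
    · intro g
      ext <;> simp
end

section
/- Let k be a field, g a Lie algebra over k, and let (λ, D) and (λ', D') be twisted derivations of g, with associated Lie algebras g ⋈_{(λ,D)} k and g ⋈_{(λ',D')} k. There exists an isomorphism of Lie algebras g ⋈_{(λ,D)} k → g ⋈_{(λ',D')} k which stabilizes g (maps (g,0) to (g,0)) and co-stabilizes k (the second component of the image of (g,a) is a) if and only if λ = λ' and D − D' is an inner twisted derivation, i.e. there exists g₀ ∈ g such that D(h) − D'(h) = [g₀, h] − λ(h)·g₀ for all h ∈ g. -/
/-- Theorem 4.6(3): there is a Lie algebra isomorphism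
`G ⋈_{(λ,D)} k → G ⋈_{(λ',D')} k` stabilizing `G` and co-stabilizing `k` iff
`λ = λ'` and `D - D'` is an inner twisted derivation. -/
theorem twDer_iso_stab_costab_iff {k G : Type*} [Field k] [LieRing G] [LieAlgebra k G]
    (lam lam' : G →ₗ[k] k) (D D' : G →ₗ[k] G)
    (hlam : ∀ g h : G, lam ⁅g, h⁆ = 0)
    (hD : ∀ g h : G, D ⁅g, h⁆ = ⁅D g, h⁆ + ⁅g, D h⁆ + lam g • D h - lam h • D g)
    (hlam' : ∀ g h : G, lam' ⁅g, h⁆ = 0)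
    (hD' : ∀ g h : G, D' ⁅g, h⁆ = ⁅D' g, h⁆ + ⁅g, D' h⁆ + lam' g • D' h - lam' h • D' g) :
    (∃ ψ : (G × k) ≃ₗ[k] G × k,
        (∀ u w : G × k, ψ (twDerBracket lam D u w) =
          twDerBracket lam' D' (ψ u) (ψ w)) ∧
        (∀ g : G, ψ (g, 0) = (g, 0)) ∧
        (∀ u : G × k, (ψ u).2 = u.2)) ↔
      (lam = lam' ∧ ∃ g₀ : G,
        ∀ h : G, D h - D' h = ⁅g₀, h⁆ - lam h • g₀) := by
  constructor
  · rintro ⟨ψ, hb, hs, hc⟩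
    have key : ∀ h : G, lam h = lam' h ∧
        D h - D' h = ⁅(ψ (0, 1)).1, h⁆ - lam h • (ψ (0, 1)).1 := by
      intro h
      have h1 := hb (0, 1) (h, 0)
      have h2 : twDerBracket lam D (0, 1) (h, 0) = (D h, 0) + lam h • ((0 : G), (1 : k)) := by
        simp [twDerBracket]
      have h3 := hc (0, 1)
      rw [h2, map_add, map_smul, hs, hs] at h1
      have e1 := congrArg Prod.fst h1
      have e2 := congrArg Prod.snd h1
      simp [twDerBracket, h3] at e1 e2
      refine ⟨e2, ?_⟩
      rw [sub_eq_sub_iff_add_eq_add]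
      exact e1
    exact ⟨LinearMap.ext fun h => (key h).1, _, fun h => (key h).2⟩
  · rintro ⟨rfl, r, hr⟩
    let ψ : (G × k) ≃ₗ[k] G × k :=
      { toFun := fun u => (u.1 + u.2 • r, u.2)
        invFun := fun u => (u.1 - u.2 • r, u.2)
        map_add' := by
          intro u w
          ext
          · simp only [Prod.fst_add, Prod.snd_add]
            module
          · simp
        map_smul' := by
          intro c u
          ext
          · simp only [Prod.smul_fst, Prod.smul_snd, RingHom.id_apply, smul_eq_mul]
            module
          · simp
        left_inv := by intro u; simp
        right_inv := by intro u; simp }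
    have hψ : ∀ u, ψ u = (u.1 + u.2 • r, u.2) := fun _ => rfl
    refine ⟨ψ, ?_, ?_, ?_⟩
    · rintro ⟨g, a⟩ ⟨h, b⟩
      have e1 : D h = D' h + (⁅r, h⁆ - lam h • r) := by rw [← hr]; abel
      have e2 : D g = D' g + (⁅r, g⁆ - lam g • r) := by rw [← hr]; abel
      have e3 : ⁅g, r⁆ = -⁅r, g⁆ := (lie_skew g r).symm
      simp only [hψ, twDerBracket]
      ext
      · simp only [e1, e2, map_add, map_smul, lie_add, add_lie, lie_smul, smul_lie, lie_self, e3]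
        module
      · simp only [map_add, map_smul, smul_eq_mul]
        ring
    · intro g
      simp [hψ]
    · intro u
      rfl
end

section
/- Let k be a field and g a perfect Lie algebra over k. For derivations D, D' of g, denote by g ⋈_D k and g ⋈_{D'} k the Lie algebras on g × k with bracket [(g,a),(h,b)] = ([g,h] + a·D(h) − b·D(g), 0) (respectively with D'). Then: (1) there exists a Lie algebra isomorphism g ⋈_D k → g ⋈_{D'} k stabilizing g (mapping (g,0) to (g,0)) if and only if there exists a nonzero scalar q ∈ k such that D − q·D' is an inner derivation of g (i.e. of the form [g₀, −] for some g₀ ∈ g); (2) there exists such an isomorphism which in addition co-stabilizes k (second component of the image of (g,a) is a) if and only if D − D' is an inner derivation of g. -/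
/-- The bracket of `G ⋈_D k` on `G × k` for a derivation `D` of `G`:
`[(g,a),(h,b)] = ([g,h] + a·D(h) - b·D(g), 0)`. -/
def derBracket {k G : Type*} [Field k] [LieRing G] [LieAlgebra k G]
    (D : G →ₗ[k] G) : G × k → G × k → G × k :=
  fun u w => (⁅u.1, w.1⁆ + u.2 • D w.1 - w.2 • D u.1, 0)

theorem aux_fwd {k G : Type*} [Field k] [LieRing G] [LieAlgebra k G]
    (D D' : G →ₗ[k] G) (ψ : (G × k) ≃ₗ[k] G × k)
    (h1 : ∀ u w : G × k, ψ (derBracket D u w) = derBracket D' (ψ u) (ψ w))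
    (h2 : ∀ g : G, ψ (g, 0) = (g, 0)) (h : G) :
    D h - (ψ (0, 1)).2 • D' h = ⁅(ψ (0, 1)).1, h⁆ := by
  have := h1 (0, 1) (h, 0)
  simp only [derBracket, h2] at this
  have := congrArg Prod.fst this
  simp at this
  rw [this]; abel

theorem aux_ne {k G : Type*} [Field k] [LieRing G] [LieAlgebra k G]
    (ψ : (G × k) ≃ₗ[k] G × k)
    (h2 : ∀ g : G, ψ (g, 0) = (g, 0)) : (ψ (0, 1)).2 ≠ 0 := by
  intro hq
  have h3 : ψ (0, 1) = ψ ((ψ (0, 1)).1, 0) := by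
    rw [h2]; exact Prod.ext rfl hq
  have := congrArg Prod.snd (ψ.injective h3)
  simp at this

/-- The isomorphism `(g, a) ↦ (g + a g₀, q a)`. -/
def auxEquiv {k G : Type*} [Field k] [LieRing G] [LieAlgebra k G]
    (q : k) (hq : q ≠ 0) (g₀ : G) : (G × k) ≃ₗ[k] G × k where
  toFun u := (u.1 + u.2 • g₀, q * u.2)
  invFun u := (u.1 - (q⁻¹ * u.2) • g₀, q⁻¹ * u.2)
  map_add' u w := by
    ext
    · simp only [Prod.fst_add, Prod.snd_add]; module
    · simp only [Prod.snd_add]; ring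
  map_smul' c u := by
    ext
    · simp [smul_smul]
    · simp; ring
  left_inv u := by ext <;> simp [hq]
  right_inv u := by ext <;> simp [hq]

theorem aux_bwd {k G : Type*} [Field k] [LieRing G] [LieAlgebra k G]
    (D D' : G →ₗ[k] G) (q : k) (hq : q ≠ 0) (g₀ : G)
    (h : ∀ h : G, D h - q • D' h = ⁅g₀, h⁆) (u w : G × k) :
    auxEquiv q hq g₀ (derBracket D u w)
      = derBracket D' (auxEquiv q hq g₀ u) (auxEquiv q hq g₀ w) := by
  have h' : ∀ x, D x = ⁅g₀, x⁆ + q • D' x := fun x => by rw [← h x]; abel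
  have hs : ⁅u.1, g₀⁆ = - ⁅g₀, u.1⁆ := (lie_skew _ _).symm
  ext
  · simp only [auxEquiv, derBracket, LinearEquiv.coe_mk, LinearMap.coe_mk, AddHom.coe_mk, h',
      lie_add, add_lie, lie_smul, smul_lie, lie_self, map_add, map_smul, hs]
    module
  · simp [auxEquiv, derBracket]

/-- Corollary 4.7: for a perfect Lie algebra `G` and derivations `D, D'`,
(1) `G ⋈_D k ≅ G ⋈_{D'} k` via an isomorphism stabilizing `G` iff `D - q·D'` is
inner for some `q ∈ k*`; (2) via an isomorphism also co-stabilizing `k` iff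
`D - D'` is inner. -/
theorem der_iso_stab_iff_perfect {k G : Type*} [Field k] [LieRing G] [LieAlgebra k G]
    (hperf : LieAlgebra.derivedSeries k G 1 = ⊤)
    (D D' : G →ₗ[k] G)
    (hD : ∀ g h : G, D ⁅g, h⁆ = ⁅D g, h⁆ + ⁅g, D h⁆)
    (hD' : ∀ g h : G, D' ⁅g, h⁆ = ⁅D' g, h⁆ + ⁅g, D' h⁆) :
    ((∃ ψ : (G × k) ≃ₗ[k] G × k,
        (∀ u w : G × k, ψ (derBracket D u w) = derBracket D' (ψ u) (ψ w)) ∧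
        ∀ g : G, ψ (g, 0) = (g, 0)) ↔
      ∃ (q : k) (g₀ : G), q ≠ 0 ∧ ∀ h : G, D h - q • D' h = ⁅g₀, h⁆) ∧
    ((∃ ψ : (G × k) ≃ₗ[k] G × k,
        (∀ u w : G × k, ψ (derBracket D u w) = derBracket D' (ψ u) (ψ w)) ∧
        (∀ g : G, ψ (g, 0) = (g, 0)) ∧
        (∀ u : G × k, (ψ u).2 = u.2)) ↔
      ∃ g₀ : G, ∀ h : G, D h - D' h = ⁅g₀, h⁆) := by
  refine ⟨⟨?_, ?_⟩, ⟨?_, ?_⟩⟩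
  · rintro ⟨ψ, h1, h2⟩
    exact ⟨_, _, aux_ne ψ h2, aux_fwd D D' ψ h1 h2⟩
  · rintro ⟨q, g₀, hq, h⟩
    exact ⟨auxEquiv q hq g₀, aux_bwd D D' q hq g₀ h, fun g => by simp [auxEquiv]⟩
  · rintro ⟨ψ, h1, h2, h3⟩
    refine ⟨(ψ (0, 1)).1, fun h => ?_⟩
    have := aux_fwd D D' ψ h1 h2 h
    rwa [h3, one_smul] at this
  · rintro ⟨g₀, h⟩
    exact ⟨auxEquiv 1 one_ne_zero g₀, aux_bwd D D' 1 one_ne_zero g₀ (by simpa using h),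
      fun g => by simp [auxEquiv], fun u => by simp [auxEquiv]⟩
end

section
/- Let k be a field, g a perfect Lie algebra over k such that every derivation of g is inner (Der(g) = Inn(g)), and let E be a Lie algebra over k containing g as a Lie subalgebra of codimension 1. Then there exists an isomorphism of Lie algebras from E to the direct product g × k (the Lie algebra on g × k with bracket [(g,a),(h,b)] = ([g,h], 0), where k carries the 1-dimensional abelian Lie algebra structure) which stabilizes g, i.e. acts as the identity on g. -/
theorem aux_equiv {k G E : Type*} [Field k]
    [LieRing G] [LieAlgebra k G] [LieRing E] [LieAlgebra k E]
    (ι : G →ₗ⁅k⁆ E) (hι : Function.Injective ι)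
    (e : E) (he : e ∉ Set.range ι)
    (hcodim : ∀ z : E, ∃ (a : G) (c : k), z = ι a + c • e) :
    ∃ φ : (G × k) ≃ₗ[k] E, ∀ a c, φ (a, c) = ι a + c • e := by
  let f : (G × k) →ₗ[k] E :=
    LinearMap.coprod (ι : G →ₗ[k] E) (LinearMap.toSpanSingleton k E e)
  have hf : ∀ a c, f (a, c) = ι a + c • e := fun a c => by simp [f]
  refine ⟨LinearEquiv.ofBijective f ⟨?_, ?_⟩, fun a c => hf a c⟩
  · rw [← LinearMap.ker_eq_bot, LinearMap.ker_eq_bot']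
    rintro ⟨a, c⟩ h
    rw [hf] at h
    have hc : c = 0 := by
      by_contra hc
      apply he
      refine ⟨-(c⁻¹ • a), ?_⟩
      have h2 : c • e = - ι a := by rw [eq_neg_iff_add_eq_zero, add_comm]; exact h
      rw [map_neg, map_smul, ← smul_neg, ← h2, smul_smul, inv_mul_cancel₀ hc, one_smul]
    subst hc
    have : ι a = 0 := by simpa using h
    have : a = 0 := hι (by rw [this, map_zero])
    simp [this]
  · intro z
    obtain ⟨a, c, h⟩ := hcodim z
    exact ⟨(a, c), by rw [hf, h]⟩

/-- Corollary 4.8: if `G` is a perfect Lie algebra all of whose derivations are inner,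
and `E` is a Lie algebra containing `G` as a Lie subalgebra of codimension 1, then
`E` is isomorphic, via an isomorphism stabilizing `G`, to the direct product
`G × k` with bracket `[(g,a),(h,b)] = ([g,h], 0)`. -/
theorem codim_one_extension_of_perfect_inner {k G E : Type*} [Field k]
    [LieRing G] [LieAlgebra k G] [LieRing E] [LieAlgebra k E]
    (hperf : LieAlgebra.derivedSeries k G 1 = ⊤)
    (hinner : ∀ D : G →ₗ[k] G, (∀ g h : G, D ⁅g, h⁆ = ⁅D g, h⁆ + ⁅g, D h⁆) →
      ∃ g₀ : G, ∀ h : G, D h = ⁅g₀, h⁆)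
    (ι : G →ₗ⁅k⁆ E) (hι : Function.Injective ι)
    (e : E) (he : e ∉ Set.range ι)
    (hcodim : ∀ z : E, ∃ (a : G) (c : k), z = ι a + c • e) :
    ∃ ψ : E ≃ₗ[k] G × k,
      (∀ z w : E, ψ ⁅z, w⁆ = (⁅(ψ z).1, (ψ w).1⁆, 0)) ∧
      ∀ a : G, ψ (ι a) = (a, 0) := by
  obtain ⟨φ, hφ⟩ := aux_equiv ι hι e he hcodim
  let T : G →ₗ[k] G × k :=
    φ.symm.toLinearMap ∘ₗ (LieAlgebra.ad k E e : E →ₗ[k] E) ∘ₗ (ι : G →ₗ[k] E)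
  have hT : ∀ g, ⁅e, ι g⁆ = ι (T g).1 + (T g).2 • e := by
    intro g
    rw [← hφ]
    simp [T]
  have key : ∀ g h, T ⁅g, h⁆ = (⁅(T g).1, h⁆ + ⁅g, (T h).1⁆ + (T g).2 • (T h).1
      - (T h).2 • (T g).1, 0) := by
    intro g h
    apply φ.injective
    have h1 : φ (T ⁅g, h⁆) = ⁅e, ι ⁅g, h⁆⁆ := by simp [T]
    have h3 : ⁅ι g, e⁆ = -(ι (T g).1 + (T g).2 • e) := by rw [← hT, lie_skew]
    rw [h1, hφ, LieHom.map_lie, leibniz_lie, hT g, hT h]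
    simp only [add_lie, lie_add, smul_lie, lie_smul, hT h, h3, map_add, map_sub, map_smul,
      LieHom.map_lie]
    module
  have hl : ∀ g, (T g).2 = 0 := by
    intro g
    have hg : g ∈ LieAlgebra.derivedSeries k G 1 := by rw [hperf]; trivial
    rw [LieAlgebra.derivedSeries_def, LieAlgebra.derivedSeriesOfIdeal_succ,
      LieAlgebra.derivedSeriesOfIdeal_zero, ← LieSubmodule.mem_toSubmodule,
      LieSubmodule.lieIdeal_oper_eq_linear_span'] at hg
    induction hg using Submodule.span_induction with
    | mem x hx =>
      obtain ⟨a, -, b, -, rfl⟩ := hx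
      rw [key]
    | zero => simp
    | add x y _ _ hx hy => simp [hx, hy]
    | smul c x _ hx => simp [hx]
  obtain ⟨g₀, hg₀⟩ := hinner (LinearMap.fst k G k ∘ₗ T) (by
    intro g h
    simp [key, hl])
  have hcen : ∀ a, ⁅e - ι g₀, ι a⁆ = 0 := by
    intro a
    have := hg₀ a
    simp only [LinearMap.comp_apply, LinearMap.fst_apply] at this
    rw [sub_lie, hT, hl, this, LieHom.map_lie]
    simp
  have hcen' : ∀ a, ⁅ι a, e - ι g₀⁆ = 0 := by
    intro a
    rw [← lie_skew, hcen, neg_zero]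
  obtain ⟨χ, hχ⟩ := aux_equiv ι hι (e - ι g₀)
    (by
      rintro ⟨a, ha⟩
      exact he ⟨a + g₀, by rw [map_add, ha]; abel⟩)
    (by
      intro z
      obtain ⟨a, c, h⟩ := hcodim z
      refine ⟨a + c • g₀, c, ?_⟩
      rw [h, map_add, map_smul]
      module)
  refine ⟨χ.symm, ?_, ?_⟩
  · intro z w
    obtain ⟨⟨a, c⟩, rfl⟩ := χ.surjective z
    obtain ⟨⟨b, d⟩, rfl⟩ := χ.surjective w
    rw [LinearEquiv.symm_apply_eq]
    simp only [LinearEquiv.symm_apply_apply]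
    rw [hχ, hχ, hχ]
    simp only [add_lie, lie_add, smul_lie, lie_smul, hcen, hcen', lie_self, LieHom.map_lie]
    simp
  · intro a
    rw [LinearEquiv.symm_apply_eq, hχ]
    simp
end
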